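/- arXiv:2104.13905 — 4 statements merged into one kernel-verified Lean document; each statement's English description precedes it below -/
import Mathlib

section
/- Let w* be the minimum integer w for which ∑_{d=d_min^h}^{w} B_d ≥ 2^m (such a w exists since |C_h \ {0}| = 2^{k+m} − 1 ≥ 2^m). Then d_min^l ≤ 2·w*. -/
open scoped BigOperators

theorem stmt2 (k m n : ℕ) (hk : 1 ≤ k) (hm : 1 ≤ m) (hn : k + m ≤ n)
    (Ch Cl : Submodule (ZMod 2) (Fin n → ZMod 2)) (hsub : Cl ≤ Ch)
    (hChcard : Nat.card Ch = 2 ^ (k + m)) (hClcard : Nat.card Cl = 2 ^ k)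
    -- weight distribution of the higher-rate code
    (B : ℕ → ℕ)
    (hB : ∀ d, B d = Nat.card {c : Fin n → ZMod 2 // c ∈ Ch ∧ hammingNorm c = d})
    -- minimum distances of the two codes
    (dminh dminl : ℕ)
    (hdminh : dminh = sInf {d : ℕ | ∃ c ∈ Ch, c ≠ 0 ∧ hammingNorm c = d})
    (hdminl : dminl = sInf {d : ℕ | ∃ c ∈ Cl, c ≠ 0 ∧ hammingNorm c = d})
    -- w* is the least w with ∑_{d=dminh}^w B_d ≥ 2^m
    (wstar : ℕ)
    (hwstar : wstar = sInf {w : ℕ | 2 ^ m ≤ ∑ d ∈ Finset.Icc dminh w, B d}) :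
    dminl ≤ 2 * wstar := by
  classical
  set H : Finset (Fin n → ZMod 2) := Finset.univ.filter (fun c => c ∈ Ch) with hH
  set L : Finset (Fin n → ZMod 2) := Finset.univ.filter (fun c => c ∈ Cl) with hL
  have cH : H.card = 2 ^ (k + m) := by
    rw [← hChcard, hH, ← Fintype.card_subtype, ← Nat.card_eq_fintype_card]
  have cL : L.card = 2 ^ k := by
    rw [← hClcard, hL, ← Fintype.card_subtype, ← Nat.card_eq_fintype_card]
  have hB' : ∀ d, B d = (H.filter (fun c => hammingNorm c = d)).card := by
    intro d
    rw [hB, Nat.card_eq_fintype_card, Fintype.card_subtype, hH, Finset.filter_filter]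
  have h0 : (0 : Fin n → ZMod 2) ∈ H := by simp [hH]
  have cE : (H.erase 0).card = 2 ^ (k + m) - 1 := by
    rw [Finset.card_erase_of_mem h0, cH]
  have hge : 2 ^ m ≤ (H.erase 0).card := by
    rw [cE]
    have h1 : 2 ^ (m + 1) ≤ 2 ^ (k + m) := Nat.pow_le_pow_right (by norm_num) (by omega)
    have h2 : 1 ≤ 2 ^ m := Nat.one_le_two_pow
    rw [pow_succ] at h1
    omega
  have hne : (H.erase 0).Nonempty := by
    rw [← Finset.card_pos]
    exact lt_of_lt_of_le (by positivity) hge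
  have hmin : ∀ c ∈ H, c ≠ 0 → dminh ≤ hammingNorm c := by
    intro c hc h
    rw [hdminh]
    exact Nat.sInf_le ⟨c, by simpa [hH] using hc, h, rfl⟩
  have hpos : 1 ≤ dminh := by
    obtain ⟨c, hc⟩ := hne
    have hn' : {d : ℕ | ∃ c ∈ Ch, c ≠ 0 ∧ hammingNorm c = d}.Nonempty :=
      ⟨hammingNorm c, c, by simpa [hH] using Finset.mem_of_mem_erase hc,
        Finset.ne_of_mem_erase hc, rfl⟩
    have := Nat.sInf_mem hn'
    rw [← hdminh] at this
    obtain ⟨c', -, h2, h3⟩ := this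
    rw [← h3]
    exact hammingNorm_pos_iff.mpr h2
  have hsum : ∀ w, ∑ d ∈ Finset.Icc dminh w, B d
      = ((H.erase 0).filter (fun c => hammingNorm c ≤ w)).card := by
    intro w
    rw [Finset.card_eq_sum_card_fiberwise (f := fun c => hammingNorm c)
      (t := Finset.Icc dminh w)]
    · refine Finset.sum_congr rfl fun d hd => ?_
      rw [hB']
      congr 1
      ext c
      rw [Finset.mem_Icc] at hd
      simp only [Finset.mem_filter, Finset.mem_erase]
      constructor
      · rintro ⟨h1, h2⟩
        refine ⟨⟨⟨?_, h1⟩, by omega⟩, h2⟩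
        rintro rfl
        rw [hammingNorm_zero] at h2
        omega
      · rintro ⟨⟨⟨_, h1⟩, _⟩, h2⟩
        exact ⟨h1, h2⟩
    · intro c hc
      simp only [Finset.coe_filter, Finset.mem_erase, Set.mem_setOf_eq] at hc
      simp only [Finset.coe_Icc, Set.mem_Icc]
      exact ⟨hmin c hc.1.2 hc.1.1, hc.2⟩
  have hw : 2 ^ m ≤ ∑ d ∈ Finset.Icc dminh wstar, B d := by
    have hn' : {w : ℕ | 2 ^ m ≤ ∑ d ∈ Finset.Icc dminh w, B d}.Nonempty := by
      refine ⟨n, ?_⟩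
      rw [Set.mem_setOf_eq, hsum, Finset.filter_true_of_mem]
      · exact hge
      · intro c _
        simpa using hammingNorm_le_card_fintype (x := c)
    have := Nat.sInf_mem hn'
    rw [← hwstar] at this
    exact this
  rw [hsum] at hw
  set T := H.filter (fun c => hammingNorm c ≤ wstar) with hT
  have hTE : (H.erase 0).filter (fun c => hammingNorm c ≤ wstar) = T.erase 0 := by
    rw [hT, Finset.filter_erase]
  have h0T : (0 : Fin n → ZMod 2) ∈ T := by simp [hT, h0]
  rw [hTE, Finset.card_erase_of_mem h0T] at hw
  have hTc : 2 ^ m < T.card := by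
    have : 0 < T.card := Finset.card_pos.mpr ⟨0, h0T⟩
    omega
  have hlt : H.card < (T ×ˢ L).card := by
    rw [Finset.card_product, cH, cL, pow_add, mul_comm]
    exact Nat.mul_lt_mul_of_pos_right hTc (by positivity)
  obtain ⟨⟨t, c⟩, hx, ⟨t', c'⟩, hy, hxy, he⟩ :=
    Finset.exists_ne_map_eq_of_card_lt_of_maps_to hlt
      (f := fun p => p.1 + p.2) (by
        rintro ⟨t, c⟩ h
        simp only [Finset.coe_product, Set.mem_prod, Finset.mem_coe, hT, hH, hL,
          Finset.mem_filter, Finset.mem_univ, true_and] at h ⊢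
        exact Ch.add_mem h.1.1 (hsub h.2))
  simp only [Finset.mem_product, hT, hH, hL,
    Finset.mem_filter, Finset.mem_univ, true_and] at hx hy he
  have hd : t - t' = c' - c := by
    rw [sub_eq_sub_iff_add_eq_add, he, add_comm]
  have htt : t - t' ≠ 0 := by
    intro h
    have h1 := sub_eq_zero.mp h
    rw [h] at hd
    have h2 := sub_eq_zero.mp hd.symm
    exact hxy (by rw [h1, h2])
  have hle : dminl ≤ hammingNorm (t - t') := by
    rw [hdminl]
    exact Nat.sInf_le ⟨t - t', by rw [hd]; exact Cl.sub_mem hy.2 hx.2, htt, rfl⟩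
  have htri : hammingNorm (t - t') ≤ hammingNorm t + hammingNorm t' := by
    have h := hammingDist_triangle t 0 t'
    rw [hammingDist_zero_right, hammingDist_zero_left, hammingDist_comm t t',
      hammingDist_eq_hammingNorm, neg_add_eq_sub] at h
    exact h
  have := hx.1.2
  have := hy.1.2
  omega
end

section
/- Every tail-biting path in TBP(σ) can be obtained by first concatenating finitely many irreducible error events from IEE(σ) into a closed path at σ and then applying a cyclic shift. Equivalently: for every (s, a) ∈ TBP(σ) there is a cyclic shift of (s, a) whose state/output sequence is the concatenation of finitely many elements of IEE(σ). -/
/-- `IsIEE E σ N ℓ s a` states that the path of length `ℓ` with state sequence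
`s 0, …, s ℓ` and output sequence `a 0, …, a (ℓ-1)` is an irreducible error event
at state `σ` (for a tail-biting trellis of depth `N`): it has length between `1`
and `N`, starts and ends at `σ`, all its transitions are labeled edges, and no
interior state lies in `{τ : τ ≤ σ}`. -/
def IsIEE {S A : Type*} [LinearOrder S] (E : S → A → S → Prop) (σ : S) (N ℓ : ℕ)
    (s : ℕ → S) (a : ℕ → A) : Prop :=
  1 ≤ ℓ ∧ ℓ ≤ N ∧ s 0 = σ ∧ s ℓ = σ ∧
    (∀ i < ℓ, E (s i) (a i) (s (i + 1))) ∧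
    ∀ i, 0 < i → i < ℓ → ¬ s i ≤ σ

theorem exists_breakpoints (P : ℕ → Prop) (h0 : P 0) (n : ℕ) (hn : P n) :
    ∃ r : ℕ, ∃ t : ℕ → ℕ, t 0 = 0 ∧ t r = n ∧ (∀ i < r, t i < t (i + 1)) ∧
      (∀ i ≤ r, P (t i) ∧ t i ≤ n) ∧ ∀ i < r, ∀ x, t i < x → x < t (i + 1) → ¬ P x := by
  classical
  induction n using Nat.strong_induction_on with
  | _ n ih =>
    rcases Nat.eq_zero_or_pos n with h | h
    · subst h
      exact ⟨0, fun _ => 0, rfl, rfl, by simp, by simpa using h0, by simp⟩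
    · obtain ⟨m, hm, hPm, hmax⟩ : ∃ m < n, P m ∧ ∀ x, m < x → x < n → ¬ P x := by
        have h1 := Nat.findGreatest_spec (P := P) (Nat.zero_le (n - 1)) h0
        have h2 := Nat.findGreatest_le (P := P) (n - 1)
        exact ⟨Nat.findGreatest P (n - 1), by omega, h1,
          fun x hx hxn => Nat.findGreatest_is_greatest hx (by omega)⟩
      obtain ⟨r, t, t0, tr, tlt, tP, tn⟩ := ih m hm hPm
      refine ⟨r + 1, fun i => if i ≤ r then t i else n, by simp [t0], by simp, ?_, ?_, ?_⟩
      · intro i hi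
        rcases Nat.lt_succ_iff_lt_or_eq.mp hi with h | h
        · have := tlt i h
          simpa [h.le, Nat.succ_le_of_lt h] using this
        · subst h; simp [tr, hm]
      · intro i hi
        by_cases h : i ≤ r
        · have := tP i h
          simp only [h, if_true]
          exact ⟨this.1, by omega⟩
        · simp [h, hn]
      · intro i hi
        rcases Nat.lt_succ_iff_lt_or_eq.mp hi with h | h
        · have := tn i h
          simpa [h.le, Nat.succ_le_of_lt h] using this
        · subst h; simpa [tr] using hmax

/-- Every tail-biting path in `TBP(σ)` admits a cyclic shift (by some `j < N`)
which is a concatenation of finitely many irreducible error events in `IEE(σ)`.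
The shifted path has states `i ↦ s ((j + i) % N)` and outputs
`i ↦ a ((j + i) % N)`, and the breakpoints `0 = t 0 < t 1 < ⋯ < t r = N`
cut it into segments each of which is an element of `IEE(σ)`. -/
theorem stmt4 {S A : Type*} [Fintype S] [LinearOrder S]
    (E : S → A → S → Prop) (N : ℕ) (hN : 1 ≤ N) (σ : S)
    (s : ℕ → S) (a : ℕ → A)
    -- (s, a) is a tail-biting path of length N …
    (hpath : ∀ i < N, E (s i) (a i) (s (i + 1)))
    (hclosed : s 0 = s N)
    -- … belonging to TBP(σ): it visits σ and never visits a state below σ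
    (hvisit : ∃ i ≤ N, s i = σ)
    (hmin : ∀ i ≤ N, ¬ s i < σ) :
    ∃ j < N, ∃ r : ℕ, 0 < r ∧ ∃ t : ℕ → ℕ,
      t 0 = 0 ∧ t r = N ∧ (∀ i < r, t i < t (i + 1)) ∧
      ∀ i < r, IsIEE E σ N (t (i + 1) - t i)
        (fun x => s ((j + t i + x) % N)) (fun x => a ((j + t i + x) % N)) := by
  obtain ⟨j, hj, hjs⟩ : ∃ j < N, s j = σ := by
    obtain ⟨i, hi, h⟩ := hvisit
    rcases Nat.lt_or_eq_of_le hi with h' | h'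
    · exact ⟨i, h', h⟩
    · exact ⟨0, hN, by rw [hclosed, ← h', h]⟩
  obtain ⟨r, t, t0, tr, tlt, tP, tn⟩ :=
    exists_breakpoints (fun x => s ((j + x) % N) = σ)
      (by simpa [Nat.mod_eq_of_lt hj] using hjs) N
      (by simpa [Nat.mod_eq_of_lt hj] using hjs)
  refine ⟨j, hj, r, ?_, t, t0, tr, tlt, ?_⟩
  · rcases Nat.eq_zero_or_pos r with h | h
    · subst h; omega
    · exact h
  · intro i hi
    have h1 := tlt i hi
    have h2 := tP i hi.le
    have h3 := tP (i + 1) hi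
    refine ⟨by omega, by omega, by simpa using h2.1, ?_, ?_, ?_⟩
    · have e : j + t i + (t (i + 1) - t i) = j + t (i + 1) := by omega
      simpa only [e] using h3.1
    · intro x _
      have hlt : (j + t i + x) % N < N := Nat.mod_lt _ hN
      have key : s ((j + t i + (x + 1)) % N) = s ((j + t i + x) % N + 1) := by
        rw [← add_assoc, ← Nat.mod_add_mod (j + t i + x) N 1]
        rcases Nat.lt_or_eq_of_le (Nat.succ_le_of_lt hlt) with h | h
        · rw [Nat.mod_eq_of_lt h]
        · have h' : (j + t i + x) % N + 1 = N := h
          rw [h', Nat.mod_self, hclosed]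
      simp only [key]
      exact hpath _ hlt
    · intro x hx0 hx hle
      have hlt : (j + t i + x) % N < N := Nat.mod_lt _ hN
      refine tn i hi (t i + x) (by omega) (by omega) ?_
      have := le_antisymm hle (not_lt.mp (hmin _ hlt.le))
      simpa only [← add_assoc] using this
end

section
/- Every order-s decoding region Z_s(c) is an open subset of ℝⁿ. Moreover, for every c ∈ C_l and every integer s ≥ 2, if Z_s(c) is nonempty then Z_{s−1}(c) is nonempty. Consequently, Z_s(c) is open and nonempty for every c ∈ C_l and every 1 ≤ s ≤ λ. -/
open scoped BigOperators

/-- The BPSK modulation map: `c ∈ F₂ⁿ` is sent to the point of `ℝⁿ`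
with coordinates `A(1 - 2 cᵢ)`. -/
noncomputable def bpsk (n : ℕ) (A : ℝ) (c : Fin n → ZMod 2) :
    EuclideanSpace ℝ (Fin n) :=
  (WithLp.equiv 2 (Fin n → ℝ)).symm fun i => A * (1 - 2 * ((c i).val : ℝ))

/-- The probability-zero set of points equidistant from two distinct
higher-rate BPSK codeword points. -/
def ambigSet (n : ℕ) (A : ℝ) (Ch : Set (Fin n → ZMod 2)) :
    Set (EuclideanSpace ℝ (Fin n)) :=
  {y | ∃ c₁ ∈ Ch, ∃ c₂ ∈ Ch, c₁ ≠ c₂ ∧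
    ‖y - bpsk n A c₁‖ = ‖y - bpsk n A c₂‖}

/-- The order-`s` decoding region `Z_s(c)`: the set of `y ∈ ℝⁿ \ N` for which
there exist distinct `c₁, …, c_{s-1} ∈ C_h \ C_l` (a finset `T` of cardinality
`s - 1`) all strictly closer to `y` than `c`, while `c` is strictly closer to
`y` than every other codeword of `C_h`. -/
def Zreg (n : ℕ) (A : ℝ) (Ch Cl : Set (Fin n → ZMod 2)) (s : ℕ)
    (c : Fin n → ZMod 2) : Set (EuclideanSpace ℝ (Fin n)) :=
  {y | y ∉ ambigSet n A Ch ∧ ∃ T : Finset (Fin n → ZMod 2),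
    T.card = s - 1 ∧ (↑T : Set (Fin n → ZMod 2)) ⊆ Ch \ Cl ∧
    (∀ c' ∈ T, ‖y - bpsk n A c'‖ < ‖y - bpsk n A c‖) ∧
    ∀ c' ∈ Ch, c' ≠ c → c' ∉ T → ‖y - bpsk n A c‖ < ‖y - bpsk n A c'‖}

theorem bpsk_inj (n : ℕ) (A : ℝ) (hA : 0 < A) : Function.Injective (bpsk n A) := by
  intro a b h
  have h1 : (fun i => A * (1 - 2 * ((a i).val : ℝ))) = fun i => A * (1 - 2 * ((b i).val : ℝ)) :=
    (WithLp.equiv 2 (Fin n → ℝ)).symm.injective h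
  funext i
  have h2 := mul_left_cancel₀ hA.ne' (congrFun h1 i)
  have h3 : ((a i).val : ℝ) = (b i).val := by linarith
  exact ZMod.val_injective 2 (by exact_mod_cast h3)

theorem dense_ne {E : Type*} [NormedAddCommGroup E] [InnerProductSpace ℝ E] [CompleteSpace E]
    (w : E) (hw : w ≠ 0) (a : ℝ) : Dense {y : E | inner ℝ w y ≠ a} := by
  have hs : Function.Surjective (innerSL ℝ w) := by
    intro r
    refine ⟨(r / inner ℝ w w) • w, ?_⟩
    have : inner ℝ w w ≠ 0 := inner_self_ne_zero.2 hw
    rw [innerSL_apply_apply, inner_smul_right]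
    field_simp
  have := (dense_compl_singleton a).preimage ((innerSL ℝ w).isOpenMap hs)
  exact this

theorem dense_all_ne {E : Type*} [NormedAddCommGroup E] [InnerProductSpace ℝ E] [CompleteSpace E]
    {ι : Type*} [Finite ι] (w : ι → E) (hw : ∀ i, w i ≠ 0) (a : ι → ℝ) :
    Dense {y : E | ∀ i, inner ℝ (w i) y ≠ a i} := by
  have := dense_iInter_of_isOpen (f := fun i => {y : E | inner ℝ (w i) y ≠ a i})
    (fun i => isOpen_ne_fun (by fun_prop) (by fun_prop)) (fun i => dense_ne _ (hw i) _)
  convert this using 1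
  ext y
  simp

theorem ambig_compl_dense (n : ℕ) (A : ℝ) (hA : 0 < A) (Ch : Set (Fin n → ZMod 2)) :
    Dense (ambigSet n A Ch)ᶜ := by
  let ι := {p : (Fin n → ZMod 2) × (Fin n → ZMod 2) // p.1 ≠ p.2}
  have := dense_all_ne (ι := ι) (fun p => bpsk n A p.1.1 - bpsk n A p.1.2)
    (fun p => sub_ne_zero.2 fun h => p.2 (bpsk_inj n A hA h))
    (fun p => (‖bpsk n A p.1.1‖ ^ 2 - ‖bpsk n A p.1.2‖ ^ 2) / 2)
  refine this.mono ?_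
  rintro y hy ⟨c₁, -, c₂, -, hne, h⟩
  apply hy ⟨(c₁, c₂), hne⟩
  have h2 : ‖y - bpsk n A c₁‖ ^ 2 = ‖y - bpsk n A c₂‖ ^ 2 := by rw [h]
  rw [norm_sub_sq_real, norm_sub_sq_real] at h2
  simp only [inner_sub_left]
  rw [real_inner_comm y, real_inner_comm y]
  linarith

theorem ambig_closed (n : ℕ) (A : ℝ) (Ch : Set (Fin n → ZMod 2)) :
    IsClosed (ambigSet n A Ch) := by
  have : ambigSet n A Ch = ⋃ p ∈ {p : (Fin n → ZMod 2) × (Fin n → ZMod 2) |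
      p.1 ∈ Ch ∧ p.2 ∈ Ch ∧ p.1 ≠ p.2}, {y | ‖y - bpsk n A p.1‖ = ‖y - bpsk n A p.2‖} := by
    ext y
    simp only [ambigSet, Set.mem_setOf_eq, Set.mem_iUnion, Prod.exists]
    constructor
    · rintro ⟨a, ha, b, hb, hne, h⟩
      exact ⟨a, b, ⟨ha, hb, hne⟩, h⟩
    · rintro ⟨a, b, ⟨ha, hb, hne⟩, h⟩
      exact ⟨a, ha, b, hb, hne, h⟩
  rw [this]
  refine (Set.toFinite _).isClosed_biUnion fun p _ => ?_
  exact isClosed_eq (by fun_prop) (by fun_prop)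

def Wreg (n : ℕ) (A : ℝ) (Ch : Set (Fin n → ZMod 2)) (T : Finset (Fin n → ZMod 2))
    (c : Fin n → ZMod 2) : Set (EuclideanSpace ℝ (Fin n)) :=
  {y | (∀ c' ∈ T, ‖y - bpsk n A c'‖ < ‖y - bpsk n A c‖) ∧
    ∀ c' ∈ Ch, c' ≠ c → c' ∉ T → ‖y - bpsk n A c‖ < ‖y - bpsk n A c'‖}

theorem Wreg_open (n : ℕ) (A : ℝ) (Ch : Set (Fin n → ZMod 2)) (T : Finset (Fin n → ZMod 2))
    (c : Fin n → ZMod 2) : IsOpen (Wreg n A Ch T c) := by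
  unfold Wreg
  simp only [Set.setOf_and, Set.setOf_forall]
  refine IsOpen.inter ?_ ?_
  · exact isOpen_iInter_of_finite fun i => isOpen_iInter_of_finite fun _ =>
      isOpen_lt (by fun_prop) (by fun_prop)
  · exact isOpen_iInter_of_finite fun i => isOpen_iInter_of_finite fun _ =>
      isOpen_iInter_of_finite fun _ => isOpen_iInter_of_finite fun _ =>
      isOpen_lt (by fun_prop) (by fun_prop)

theorem Zreg_open (n : ℕ) (A : ℝ) (Ch Cl : Set (Fin n → ZMod 2)) (s : ℕ)
    (c : Fin n → ZMod 2) : IsOpen (Zreg n A Ch Cl s c) := by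
  have : Zreg n A Ch Cl s c = (ambigSet n A Ch)ᶜ ∩
      ⋃ T ∈ {T : Finset (Fin n → ZMod 2) | T.card = s - 1 ∧
        (↑T : Set (Fin n → ZMod 2)) ⊆ Ch \ Cl}, Wreg n A Ch T c := by
    ext y
    simp only [Zreg, Wreg, Set.mem_setOf_eq, Set.mem_iUnion, Set.mem_inter_iff, Set.mem_compl_iff,
      exists_prop, and_assoc]
  rw [this]
  exact (ambig_closed n A Ch).isOpen_compl.inter
    (isOpen_biUnion fun T _ => Wreg_open n A Ch T c)

/-- Being closer, in terms of the inverted difference vector. -/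
theorem closer_iff {E : Type*} [NormedAddCommGroup E] [InnerProductSpace ℝ E]
    (z u : E) (hu : u ≠ 0) :
    (‖z - u‖ < ‖z‖ ↔ 1 / 2 < inner ℝ ((1 / ‖u‖) ^ 2 • u) z) ∧
    (‖z‖ < ‖z - u‖ ↔ inner ℝ ((1 / ‖u‖) ^ 2 • u) z < 1 / 2) := by
  have hp : 0 < ‖u‖ ^ 2 := by positivity
  rw [← sq_lt_sq₀ (norm_nonneg (z - u)) (norm_nonneg z),
    ← sq_lt_sq₀ (norm_nonneg z) (norm_nonneg (z - u)), norm_sub_sq_real,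
    real_inner_smul_left, real_inner_comm u z]
  have : (1 / ‖u‖) ^ 2 * inner ℝ z u = inner ℝ z u / ‖u‖ ^ 2 := by ring
  rw [real_inner_comm z u, this, lt_div_iff₀ hp, div_lt_iff₀ hp]
  constructor <;> constructor <;> intro h <;> linarith

theorem inv_vec_inj {E : Type*} [NormedAddCommGroup E] [InnerProductSpace ℝ E]
    (u v : E) (h : (1 / ‖u‖) ^ 2 • u = (1 / ‖v‖) ^ 2 • v) : u = v := by
  apply EuclideanGeometry.inversion_injective (0 : E) (one_ne_zero (α := ℝ))
  simpa [EuclideanGeometry.inversion] using h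

theorem Wreg_step (n : ℕ) (A : ℝ) (hA : 0 < A) (Ch : Set (Fin n → ZMod 2))
    (T : Finset (Fin n → ZMod 2)) (c : Fin n → ZMod 2) (hc : c ∉ T) (hT : T.Nonempty)
    (hne : (Wreg n A Ch T c).Nonempty) :
    ∃ d ∈ T, (Wreg n A Ch (T.erase d) c).Nonempty := by
  set v : (Fin n → ZMod 2) → EuclideanSpace ℝ (Fin n) := fun c' =>
    (1 / ‖bpsk n A c' - bpsk n A c‖) ^ 2 • (bpsk n A c' - bpsk n A c) with hv
  have hvinj : ∀ a b, v a = v b → a = b := fun a b h => by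
    have := inv_vec_inj _ _ h
    exact bpsk_inj n A hA (sub_left_injective this)
  have key : ∀ (y : EuclideanSpace ℝ (Fin n)) (c'), c' ≠ c →
      (‖y - bpsk n A c'‖ < ‖y - bpsk n A c‖ ↔ 1 / 2 < inner ℝ (v c') (y - bpsk n A c)) ∧
      (‖y - bpsk n A c‖ < ‖y - bpsk n A c'‖ ↔ inner ℝ (v c') (y - bpsk n A c) < 1 / 2) := by
    intro y c' h
    have := closer_iff (y - bpsk n A c) (bpsk n A c' - bpsk n A c)
      (sub_ne_zero.2 fun h' => h (bpsk_inj n A hA h'))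
    rwa [sub_sub_sub_cancel_right] at this
  let ι := {p : (Fin n → ZMod 2) × (Fin n → ZMod 2) // p.1 ≠ p.2}
  have hd := dense_all_ne (ι := ι) (fun p => v p.1.1 - v p.1.2)
    (fun p => sub_ne_zero.2 fun h => p.2 (hvinj _ _ h))
    (fun p => inner ℝ (v p.1.1 - v p.1.2) (bpsk n A c))
  obtain ⟨y, hyW, hy⟩ := hd.inter_open_nonempty _ (Wreg_open n A Ch T c) hne
  set z := y - bpsk n A c with hz
  have hdist : ∀ a b, a ≠ b → inner ℝ (v a) z ≠ inner ℝ (v b) z := by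
    intro a b hab h
    apply hy ⟨(a, b), hab⟩
    simp only [hz, inner_sub_left, inner_sub_right] at h ⊢
    linarith
  obtain ⟨d, hdT, hmin⟩ := T.exists_min_image (fun a => inner ℝ (v a) z) hT
  have hdc : ∀ a ∈ T, a ≠ c := fun a ha h => hc (h ▸ ha)
  have hdhalf : 1 / 2 < inner ℝ (v d) z := (key y d (hdc d hdT)).1.1 (hyW.1 d hdT)
  have hr : ∃ r : ℝ, inner ℝ (v d) z < r ∧ ∀ a ∈ T.erase d, r < inner ℝ (v a) z := by
    have h1 : ∀ᶠ r in nhdsWithin (inner ℝ (v d) z) (Set.Ioi (inner ℝ (v d) z)),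
        ∀ a ∈ T.erase d, r < inner ℝ (v a) z := by
      rw [Filter.eventually_all_finset]
      intro a ha
      have hlt : inner ℝ (v d) z < inner ℝ (v a) z :=
        lt_of_le_of_ne (hmin a (Finset.mem_of_mem_erase ha))
          (hdist _ _ (Finset.ne_of_mem_erase ha).symm)
      exact nhdsWithin_le_nhds (eventually_lt_nhds hlt)
    obtain ⟨r, hr1, hr2⟩ := (h1.and self_mem_nhdsWithin).exists
    exact ⟨r, hr2, hr1⟩
  obtain ⟨r, hr1, hr2⟩ := hr
  have hrpos : 0 < r := by linarith
  refine ⟨d, hdT, bpsk n A c + (1 / (2 * r)) • z, ?_, ?_⟩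
  · intro a ha
    rw [(key _ a (hdc a (Finset.mem_of_mem_erase ha))).1, add_sub_cancel_left,
      real_inner_smul_right]
    have := hr2 a ha
    rw [one_div_mul_eq_div, lt_div_iff₀ (by positivity)]
    linarith
  · intro a ha hac haT
    rw [(key _ a hac).2, add_sub_cancel_left, real_inner_smul_right,
      one_div_mul_eq_div, div_lt_iff₀ (by positivity)]
    by_cases had : a = d
    · subst had; linarith
    · have haT' : a ∉ T := fun h => haT (Finset.mem_erase.2 ⟨had, h⟩)
      have := (key y a hac).2.1 (hyW.2 a ha hac haT')
      rw [← hz] at this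
      linarith

theorem Zreg_step (n : ℕ) (A : ℝ) (hA : 0 < A) (Ch Cl : Set (Fin n → ZMod 2))
    (c : Fin n → ZMod 2) (hc : c ∈ Cl) (s : ℕ) (hs : 2 ≤ s)
    (h : (Zreg n A Ch Cl s c).Nonempty) : (Zreg n A Ch Cl (s - 1) c).Nonempty := by
  obtain ⟨y, -, T, hcard, hT, h1, h2⟩ := h
  have hcT : c ∉ T := fun h => (hT h).2 hc
  obtain ⟨d, hd, hne⟩ := Wreg_step n A hA Ch T c hcT (Finset.card_pos.1 (by omega)) ⟨y, h1, h2⟩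
  obtain ⟨x, hx, hxa⟩ := (ambig_compl_dense n A hA Ch).inter_open_nonempty _
    (Wreg_open n A Ch (T.erase d) c) hne
  refine ⟨x, hxa, T.erase d, ?_, fun a ha => hT (Finset.mem_of_mem_erase ha), hx.1, hx.2⟩
  rw [Finset.card_erase_of_mem hd, hcard]

theorem stmt5 (k m n : ℕ) (hk : 1 ≤ k) (hm : 1 ≤ m) (hn : k + m ≤ n)
    (A : ℝ) (hA : 0 < A)
    (Ch Cl : Submodule (ZMod 2) (Fin n → ZMod 2)) (hsub : Cl ≤ Ch)
    (hChcard : Nat.card Ch = 2 ^ (k + m)) (hClcard : Nat.card Cl = 2 ^ k)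
    -- λ is the largest s ≥ 1 such that Z_s(c) is nonempty for all c ∈ C_l
    (lam : ℕ)
    (hlam : IsGreatest
      {s : ℕ | 1 ≤ s ∧ ∀ c ∈ Cl, (Zreg n A ↑Ch ↑Cl s c).Nonempty} lam) :
    (∀ c ∈ Cl, ∀ s : ℕ, 1 ≤ s → IsOpen (Zreg n A ↑Ch ↑Cl s c)) ∧
    (∀ c ∈ Cl, ∀ s : ℕ, 2 ≤ s →
      (Zreg n A ↑Ch ↑Cl s c).Nonempty → (Zreg n A ↑Ch ↑Cl (s - 1) c).Nonempty) ∧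
    (∀ c ∈ Cl, ∀ s : ℕ, 1 ≤ s → s ≤ lam →
      IsOpen (Zreg n A ↑Ch ↑Cl s c) ∧ (Zreg n A ↑Ch ↑Cl s c).Nonempty) := by
  refine ⟨fun c _ s _ => Zreg_open _ _ _ _ _ _, fun c hc s hs h => Zreg_step n A hA _ _ c hc s hs h,
    fun c hc s h1 hs => ⟨Zreg_open _ _ _ _ _ _, ?_⟩⟩
  refine Nat.decreasingInduction' (P := fun s => (Zreg n A ↑Ch ↑Cl s c).Nonempty)
    (fun j _ hj h => ?_) hs (hlam.1.2 c hc)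
  exact Zreg_step n A hA _ _ c hc (j + 1) (by omega) h
end

section
/- Let n ≥ 2 be an integer and let 0 < r < w be real numbers. Define f on [−r, r] by f(t) = ((t + √(t² + w² − r²))/w)^{n−2} · (1 + t/√(t² + w² − r²)). Then f is monotonically increasing on [−r, r], f(−r) = (1 − r/w)^{n−1}, f(r) = (1 + r/w)^{n−1}, and consequently (1 − r/w)^{n−1} ≤ f(t) ≤ (1 + r/w)^{n−1} for all t ∈ [−r, r]. -/
/-- The induced density on the codeword sphere, as a function of the first
coordinate `t ∈ [−r, r]` of the projected point, is monotonically increasing,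
attains `(1 − r/w)^{n−1}` at `t = −r` and `(1 + r/w)^{n−1}` at `t = r`, and is
therefore bounded between these two values. -/
theorem stmt18 (n : ℕ) (hn : 2 ≤ n) (r w : ℝ) (hr : 0 < r) (hrw : r < w)
    (f : ℝ → ℝ)
    (hf : ∀ t : ℝ, f t =
      ((t + Real.sqrt (t ^ 2 + w ^ 2 - r ^ 2)) / w) ^ (n - 2) *
        (1 + t / Real.sqrt (t ^ 2 + w ^ 2 - r ^ 2))) :
    MonotoneOn f (Set.Icc (-r) r) ∧
    f (-r) = (1 - r / w) ^ (n - 1) ∧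
    f r = (1 + r / w) ^ (n - 1) ∧
    ∀ t ∈ Set.Icc (-r) r,
      (1 - r / w) ^ (n - 1) ≤ f t ∧ f t ≤ (1 + r / w) ^ (n - 1) := by
  have hw : 0 < w := hr.trans hrw
  have hc : 0 < w ^ 2 - r ^ 2 := by nlinarith
  have key : ∀ t : ℝ, ∃ A : ℝ, Real.sqrt (t ^ 2 + w ^ 2 - r ^ 2) = A ∧ 0 < A ∧
      A ^ 2 = t ^ 2 + w ^ 2 - r ^ 2 ∧ 0 < A + t ∧ 0 < A - t := by
    intro t
    have h0 : 0 < t ^ 2 + w ^ 2 - r ^ 2 := by nlinarith [sq_nonneg t]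
    have h1 := Real.sqrt_pos.2 h0
    have h2 := Real.sq_sqrt h0.le
    have h3 := abs_lt_of_sq_lt_sq' (a := t) (b := Real.sqrt (t ^ 2 + w ^ 2 - r ^ 2))
      (by rw [h2]; linarith) h1.le
    exact ⟨_, rfl, h1, h2, by linarith [h3.1], by linarith [h3.2]⟩
  have hmono : ∀ a b : ℝ, a ≤ b → f a ≤ f b := by
    intro a b hab
    rw [hf a, hf b]
    obtain ⟨A, hA, hA0, hA2, hAp, hAm⟩ := key a
    obtain ⟨B, hB, hB0, hB2, hBp, hBm⟩ := key b
    rw [hA, hB]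
    have h1 : a + A ≤ b + B := by
      have : 0 ≤ (A + B) * ((b + B) - (a + A)) := by
        have h : (A + B) * ((b + B) - (a + A)) = (b - a) * ((A + a) + (B + b)) := by
          linear_combination hB2 - hA2
        rw [h]
        exact mul_nonneg (by linarith) (by linarith)
      linarith [nonneg_of_mul_nonneg_right this (by linarith)]
    have h2 : B - b ≤ A - a := by
      have : 0 ≤ (A + B) * ((A - a) - (B - b)) := by
        have h : (A + B) * ((A - a) - (B - b)) = (b - a) * ((A - a) + (B - b)) := by
          linear_combination hA2 - hB2
        rw [h]
        exact mul_nonneg (by linarith) (by linarith)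
      linarith [nonneg_of_mul_nonneg_right this (by linarith)]
    have h3 : a / A ≤ b / B := by
      rw [div_le_div_iff₀ hA0 hB0]
      have := mul_le_mul h1 h2 hBm.le (by linarith)
      linarith
    have h4 : -1 ≤ a / A := by
      rw [le_div_iff₀ hA0]; linarith
    apply mul_le_mul
    · apply pow_le_pow_left₀
      · exact div_nonneg (by linarith) hw.le
      · exact div_le_div_of_nonneg_right h1 hw.le
    · linarith
    · linarith
    · exact pow_nonneg (div_nonneg (by linarith) hw.le) _
  have hs : Real.sqrt (r ^ 2 + w ^ 2 - r ^ 2) = w := by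
    rw [add_sub_cancel_left, Real.sqrt_sq hw.le]
  have hn1 : n - 1 = (n - 2) + 1 := by omega
  have hl : f (-r) = (1 - r / w) ^ (n - 1) := by
    rw [hf, neg_sq, hs, hn1, pow_succ]
    congr 2
    · field_simp
      ring
    · ring
  have hu : f r = (1 + r / w) ^ (n - 1) := by
    rw [hf, hs, hn1, pow_succ]
    congr 2
    field_simp
    ring
  refine ⟨fun a _ b _ h => hmono a b h, hl, hu, fun t ht => ⟨?_, ?_⟩⟩
  · rw [← hl]; exact hmono _ _ ht.1
  · rw [← hu]; exact hmono _ _ ht.2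
end
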